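/- Let n ≥ 12s². Then the maximum number of edges of an n-vertex 3-graph that is F_{3,2}-free and has matching number at most s equals s·C(n−s,2), and the unique extremal hypergraph (up to isomorphism) is H(n,s): with vertex set A ∪ B, |A| = s, |B| = n−s, and edges all triples with exactly one vertex in A and two in B. -/

import Mathlib

open Finset

/-- Degree of a vertex in a 3-graph. -/
def degH {n : ℕ} (H : Finset (Finset (Fin n))) (v : Fin n) : ℕ :=
  (H.filter (fun e => v ∈ e)).card

/-- `H` is a 3-uniform hypergraph. -/
def Uniform3 {n : ℕ} (H : Finset (Finset (Fin n))) : Prop :=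
  ∀ e ∈ H, e.card = 3

/-- The matching number of `H` is at most `s`. -/
def MatchingAtMost {n : ℕ} (H : Finset (Finset (Fin n))) (s : ℕ) : Prop :=
  ∀ M ⊆ H, (M : Set (Finset (Fin n))).Pairwise (fun e f => Disjoint e f) → M.card ≤ s

/-- `H` contains a copy of the hypergraph with edge set `F`. -/
def HasCopy {α : Type*} [DecidableEq α] {n : ℕ}
    (F : Set (Finset α)) (H : Finset (Finset (Fin n))) : Prop :=
  ∃ f : α → Fin n, Function.Injective f ∧ ∀ e ∈ F, e.image f ∈ H

/-- Number of edges of the Turán graph `T(n, r)`. -/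
def turanEdges (n r : ℕ) : ℕ := (SimpleGraph.turanGraph n r).edgeFinset.card

/-- Edge set of the 3-graph `F_{3,2}` on `{1,…,5}` (as `Fin 5`):
edges `123, 145, 245, 345`. -/
def F32Edges : Set (Finset (Fin 5)) :=
  {({0, 1, 2} : Finset (Fin 5)), {0, 3, 4}, {1, 3, 4}, {2, 3, 4}}

/-- The 3-graph `H(n,s)`: all triples with exactly one vertex in the set
`A` of the first `s` vertices (and two in `B`). -/
def Hns (n s : ℕ) : Finset (Finset (Fin n)) :=
  Finset.univ.filter (fun e => e.card = 3 ∧ (e.filter (fun v : Fin n => (v : ℕ) < s)).card = 1)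

/-!
Delete vertices from `H` as long as each deletion lowers the matching number. If this stops at a
hypergraph `K` with matching number `m > 0`, then for every vertex `v` some matching of size `m` in
`K` avoids `v`, and its `3m` vertices cover `K`; hence `K` has only `O(m² n)` edges, too few for `H`
to be extremal. (For `s = 1` this count is too weak, and intersecting families that are not stars
are bounded directly.) Otherwise `s` deleted vertices form a vertex cover `A` of `H`.

It remains to compare the edges of `H` with two or more vertices in `A` with the crossing triples
(one vertex in `A`) missing from `H`. Suppose the former are at least as many as the latter. Being
at most `C(s, 2) (n - 2)`, they leave so few triples missing that `F_{3,2}`-freeness forces more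
than `3s` missing triples to arise from each such edge by swapping a vertex of `A` for one outside
`A`. A missing triple arises from at most `3s` edges, so double counting gives a contradiction.
-/

section Choose

variable {n s k m c d : ℕ}

lemma choose_two_add_le (a d : ℕ) : (a + d).choose 2 ≤ a.choose 2 + d * (a + d - 1) := by
  induction d with
  | zero => simp
  | succ d ih =>
    calc (a + (d + 1)).choose 2
        = (a + d) + (a + d).choose 2 := by
          rw [← add_assoc, Nat.choose_succ_succ', Nat.choose_one_right]
      _ ≤ (a + d) + (a.choose 2 + d * (a + d)) := by
          grw [ih, Nat.sub_le]
      _ = a.choose 2 + (d + 1) * (a + (d + 1) - 1) := by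
          rw [← add_assoc a d 1, Nat.add_sub_cancel]
          ring

lemma mul_le_choose_two_sub (h : 2 * c + 2 * d + 1 ≤ n) : c * n ≤ (n - d).choose 2 := by
  rw [Nat.choose_two_right, Nat.le_div_iff_mul_le two_pos]
  obtain ⟨l, rfl⟩ := exists_add_of_le h
  have hsub : 2 * c + 2 * d + 1 + l - d = 2 * c + d + l + 1 := by omega
  rw [hsub, Nat.add_sub_cancel]
  nlinarith

lemma max_lt_choose_two_pred (hn : 12 ≤ n) : max 27 (5 * (n - 2)) < (n - 1).choose 2 := by
  rw [Nat.choose_two_right, ← Nat.succ_le_iff, Nat.le_div_iff_mul_le two_pos]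
  obtain ⟨l, rfl⟩ := exists_add_of_le hn
  have h1 : 12 + l - 1 = l + 11 := by omega
  have h2 : 12 + l - 2 = l + 10 := by omega
  rw [h1, h2, max_eq_right (by omega)]
  grind

lemma choose_two_mul_lt_choose_two_sub (hs : 2 ≤ s) (hn : 12 * s ^ 2 ≤ n) :
    s.choose 2 * (n - 2) < (n - (4 * s + 1)).choose 2 := by
  have hchoose : 2 * s.choose 2 ≤ s ^ 2 := by
    rw [Nat.choose_two_right]
    grw [Nat.mul_div_le, Nat.sub_le, sq]
  have hlt : n - 2 < n := Nat.sub_lt (by nlinarith) two_pos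
  exact (Nat.mul_lt_mul_of_pos_left hlt (Nat.choose_pos hs)).trans_le
    (mul_le_choose_two_sub (by nlinarith))

lemma mul_add_mul_choose_two_pred_lt (hs : 2 ≤ s) (hn : 12 * s ^ 2 ≤ n) (hm : m ≠ 0)
    (hkm : k + m = s) :
    3 * m * (3 * m * (n - 2)) + k * (n - 1).choose 2 < s * (n - s).choose 2 := by
  obtain ⟨r, rfl⟩ : ∃ r, s = r + 1 := ⟨s - 1, by omega⟩
  have hsn : r + 1 ≤ n := by nlinarith
  have hstep : (n - 1).choose 2 ≤ (n - (r + 1)).choose 2 + r * (n - 2) := by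
    convert choose_two_add_le (n - (r + 1)) r using 3 <;> omega
  have hk : k ≤ m * r := by
    have := Nat.pos_of_ne_zero hm
    nlinarith
  have hgain : (9 * (r + 1) + r * r) * (n - 2) < (n - (r + 1)).choose 2 := by
    have hlt : n - 2 < n := Nat.sub_lt (by nlinarith) two_pos
    exact (Nat.mul_lt_mul_of_pos_left hlt (by positivity)).trans_le
      (mul_le_choose_two_sub (by nlinarith))
  calc 3 * m * (3 * m * (n - 2)) + k * (n - 1).choose 2
      ≤ 9 * m * m * (n - 2) + k * ((n - (r + 1)).choose 2 + r * (n - 2)) := by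
        grw [hstep]
        grind
    _ ≤ 9 * m * (r + 1) * (n - 2) + m * r * r * (n - 2) + k * (n - (r + 1)).choose 2 := by
        have hmm : 9 * m * m * (n - 2) ≤ 9 * m * (r + 1) * (n - 2) := by gcongr; omega
        have hkr : k * (r * (n - 2)) ≤ m * r * (r * (n - 2)) := by gcongr
        linarith
    _ = m * ((9 * (r + 1) + r * r) * (n - 2)) + k * (n - (r + 1)).choose 2 := by ring
    _ < m * (n - (r + 1)).choose 2 + k * (n - (r + 1)).choose 2 :=
        Nat.add_lt_add_right (Nat.mul_lt_mul_of_pos_left hgain (Nat.pos_of_ne_zero hm)) _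
    _ = (r + 1) * (n - (r + 1)).choose 2 := by rw [← add_mul, add_comm m, hkm]

end Choose

section SetFamily

variable {α : Type*} [DecidableEq α] {H : Finset (Finset α)} {S T : Finset α} {u v : α} {d r t : ℕ}

/-- `T` is a vertex cover (transversal) of the hypergraph `H`: it meets every edge. -/
def IsVertexCover (H : Finset (Finset α)) (T : Finset α) : Prop :=
  ∀ e ∈ H, (e ∩ T).Nonempty

/-- The hypergraph `H - A` left after deleting the vertices in `A` with all edges through them. -/
def deleteVerts (H : Finset (Finset α)) (A : Finset α) : Finset (Finset α) :=
  {e ∈ H | Disjoint e A}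

lemma mem_deleteVerts {A e : Finset α} : e ∈ deleteVerts H A ↔ e ∈ H ∧ Disjoint e A :=
  mem_filter

lemma deleteVerts_subset (H : Finset (Finset α)) (A : Finset α) : deleteVerts H A ⊆ H :=
  filter_subset _ _

lemma deleteVerts_eq_empty_iff {A : Finset α} : deleteVerts H A = ∅ ↔ IsVertexCover H A := by
  simp only [deleteVerts, filter_eq_empty_iff, IsVertexCover, not_disjoint_iff_nonempty_inter]

lemma card_filter_superset_le_card_mul (hT : ∀ e ∈ H, S ⊆ e → (e ∩ T).Nonempty)
    (hd : ∀ x ∈ T, #{e ∈ H | insert x S ⊆ e} ≤ d) : #{e ∈ H | S ⊆ e} ≤ #T * d := by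
  refine (card_le_card fun e he => ?_).trans
    (card_biUnion_le_card_mul T (fun x => {e ∈ H | insert x S ⊆ e}) d hd)
  obtain ⟨heH, hSe⟩ := mem_filter.1 he
  obtain ⟨x, hx⟩ := hT e heH hSe
  obtain ⟨hxe, hxT⟩ := mem_inter.1 hx
  exact mem_biUnion.2 ⟨x, hxT, mem_filter.2 ⟨heH, insert_subset hxe hSe⟩⟩

lemma card_filter_superset_le_one (hr : (H : Set (Finset α)).Sized r) (hS : #S = r) :
    #{e ∈ H | S ⊆ e} ≤ 1 := by
  rw [← card_singleton S]
  refine card_le_card fun e he => mem_singleton.2 ?_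
  obtain ⟨heH, hSe⟩ := mem_filter.1 he
  exact (eq_of_subset_of_card_le hSe (by rw [hr heH, hS])).symm

lemma card_le_of_forall_not_pair_vertexCover [Nonempty α] (hr : (H : Set (Finset α)).Sized 3)
    (hI : (H : Set (Finset α)).Intersecting)
    (hpair : ∀ u v, ¬IsVertexCover H {u, v}) : #H ≤ 27 := by
  have exists_disjoint (u v : α) : ∃ e ∈ H, Disjoint e {u, v} := by
    simpa only [IsVertexCover, not_forall, exists_prop, ← not_disjoint_iff_nonempty_inter,
      not_not] using hpair u v
  have meets {e : Finset α} (he : e ∈ H) : IsVertexCover H e := fun f hf =>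
    not_disjoint_iff_nonempty_inter.1 (hI hf he)
  have codeg_le {u v : α} (huv : u ≠ v) : #{e ∈ H | {u, v} ⊆ e} ≤ 3 := by
    obtain ⟨g, hg, hguv⟩ := exists_disjoint u v
    rw [← hr hg, ← mul_one #g]
    refine card_filter_superset_le_card_mul (fun e he _ => meets hg e he) fun x hx => ?_
    have hx3 : #{x, u, v} = 3 := by
      rw [card_insert_of_notMem (disjoint_left.1 hguv hx), card_pair huv]
    exact card_filter_superset_le_one hr hx3
  have deg_le (v : α) : #{e ∈ H | {v} ⊆ e} ≤ 3 * 3 := by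
    obtain ⟨g, hg, hgv⟩ := exists_disjoint v v
    nth_rw 1 [← hr hg]
    exact card_filter_superset_le_card_mul (fun e he _ => meets hg e he) fun x hx =>
      codeg_le fun hxv => disjoint_left.1 hgv hx (by simp [hxv])
  obtain ⟨v⟩ := ‹Nonempty α›
  obtain ⟨g, hg, -⟩ := exists_disjoint v v
  have := card_filter_superset_le_card_mul (S := ∅) (fun e he _ => meets hg e he)
    fun x _ => deg_le x
  simpa only [empty_subset, filter_true, hr hg] using this

variable [Fintype α]

lemma card_filter_superset_le_choose (hr : (H : Set (Finset α)).Sized r) (S : Finset α) :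
    #{e ∈ H | S ⊆ e} ≤ (Fintype.card α - #S).choose (r - #S) := by
  rw [← card_compl, ← card_powersetCard]
  refine card_le_card_of_injOn (· \ S) (fun e he => ?_) fun e he f hf hef => ?_
  · obtain ⟨heH, hSe⟩ := mem_filter.1 (mem_coe.1 he)
    exact mem_powersetCard.2
      ⟨fun x hx => mem_compl.2 (mem_sdiff.1 hx).2, by rw [card_sdiff_of_subset hSe, hr heH]⟩
  · rw [← sdiff_union_of_subset (mem_filter.1 (mem_coe.1 he)).2,
      ← sdiff_union_of_subset (mem_filter.1 (mem_coe.1 hf)).2]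
    exact congrArg (· ∪ S) hef

lemma card_filter_le_card_inter_le (hr : (H : Set (Finset α)).Sized r) (A : Finset α) (j : ℕ) :
    #{e ∈ H | j ≤ #(e ∩ A)} ≤ (#A).choose j * (Fintype.card α - j).choose (r - j) := by
  rw [← card_powersetCard]
  refine (card_le_card fun e he => ?_).trans
    (card_biUnion_le_card_mul _ (fun S => {e ∈ H | S ⊆ e}) _ fun S hS => ?_)
  · obtain ⟨heH, hj⟩ := mem_filter.1 he
    obtain ⟨S, hS, hSj⟩ := exists_subset_card_eq hj
    exact mem_biUnion.2 ⟨S, mem_powersetCard.2 ⟨hS.trans inter_subset_right, hSj⟩,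
      mem_filter.2 ⟨heH, hS.trans inter_subset_left⟩⟩
  · rw [← (mem_powersetCard.1 hS).2]
    exact card_filter_superset_le_choose hr S

lemma card_le_card_deleteVerts_add (hr : (H : Set (Finset α)).Sized r) (A : Finset α) :
    #H ≤ #(deleteVerts H A) + #A * (Fintype.card α - 1).choose (r - 1) := by
  have hmeet : {e ∈ H | ¬Disjoint e A} = {e ∈ H | 1 ≤ #(e ∩ A)} :=
    filter_congr fun e _ => by rw [not_disjoint_iff_nonempty_inter, one_le_card]
  rw [← card_filter_add_card_filter_not (Disjoint · A), hmeet]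
  grw [card_filter_le_card_inter_le hr A 1, Nat.choose_one_right]
  rfl

lemma card_le_of_forall_exists_vertexCover [Nonempty α] (hr : (H : Set (Finset α)).Sized r)
    (hcov : ∀ v, ∃ T, v ∉ T ∧ #T ≤ t ∧ IsVertexCover H T) :
    #H ≤ t * (t * (Fintype.card α - 2).choose (r - 2)) := by
  have hdeg (v : α) : #{e ∈ H | {v} ⊆ e} ≤ t * (Fintype.card α - 2).choose (r - 2) := by
    obtain ⟨T, hvT, hTt, hT⟩ := hcov v
    refine (card_filter_superset_le_card_mul (fun e he _ => hT e he) fun x hx => ?_).trans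
      (Nat.mul_le_mul_right _ hTt)
    rw [← card_pair (ne_of_mem_of_not_mem hx hvT)]
    exact card_filter_superset_le_choose hr _
  obtain ⟨T, -, hTt, hT⟩ := hcov (Classical.arbitrary α)
  have := card_filter_superset_le_card_mul (S := ∅) (fun e he _ => hT e he) fun x _ => hdeg x
  simp only [empty_subset, filter_true] at this
  exact this.trans (Nat.mul_le_mul_right _ hTt)

lemma card_le_of_pair_vertexCover (hr : (H : Set (Finset α)).Sized 3)
    (hI : (H : Set (Finset α)).Intersecting) (hstar : ∀ v, ∃ e ∈ H, v ∉ e)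
    (hcov : IsVertexCover H {u, v}) : #H ≤ 5 * (Fintype.card α - 2) := by
  have codeg_le {x y : α} (hxy : x ≠ y) : #{e ∈ H | {x, y} ⊆ e} ≤ Fintype.card α - 2 := by
    simpa only [card_pair hxy, Nat.reduceSub, Nat.choose_one_right] using
      card_filter_superset_le_choose hr {x, y}
  obtain ⟨f, hf, huf⟩ := hstar u
  obtain ⟨g, hg, hvg⟩ := hstar v
  have hug : u ∈ g := by
    obtain ⟨x, hx⟩ := hcov g hg
    grind
  have hu : #{e ∈ H | {u} ⊆ e} ≤ 3 * (Fintype.card α - 2) := by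
    rw [← hr hf]
    exact card_filter_superset_le_card_mul
      (fun e he _ => not_disjoint_iff_nonempty_inter.1 (hI he hf))
      fun x hx => codeg_le (ne_of_mem_of_not_mem hx huf)
  have hv : #{e ∈ H | ¬{u} ⊆ e} ≤ 2 * (Fintype.card α - 2) := by
    have hcard : #(g.erase u) = 2 := by rw [card_erase_of_mem hug, hr hg]
    have hall : {e ∈ H | ¬{u} ⊆ e} = {e ∈ {e ∈ H | ¬{u} ⊆ e} | {v} ⊆ e} := by
      refine (filter_true_of_mem fun e he => ?_).symm
      obtain ⟨heH, hue⟩ := mem_filter.1 he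
      obtain ⟨x, hx⟩ := hcov e heH
      grind
    nth_rw 1 [hall, ← hcard]
    refine card_filter_superset_le_card_mul (fun e he _ => ?_) fun x hx => ?_
    · obtain ⟨heH, hue⟩ := mem_filter.1 he
      obtain ⟨x, hx⟩ := not_disjoint_iff_nonempty_inter.1 (hI heH hg)
      exact ⟨x, by grind⟩
    · refine (card_le_card (filter_subset_filter _ (filter_subset _ _))).trans (codeg_le ?_)
      exact ne_of_mem_of_not_mem (mem_of_mem_erase hx) hvg
  have := card_filter_add_card_filter_not (s := H) ({u} ⊆ ·)
  omega

lemma card_le_of_intersecting_of_not_star [Nonempty α] (hr : (H : Set (Finset α)).Sized 3)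
    (hI : (H : Set (Finset α)).Intersecting) (hstar : ∀ v, ∃ e ∈ H, v ∉ e) :
    #H ≤ max 27 (5 * (Fintype.card α - 2)) := by
  by_cases hpair : ∃ u v, IsVertexCover H {u, v}
  · obtain ⟨u, v, hcov⟩ := hpair
    exact le_max_of_le_right (card_le_of_pair_vertexCover hr hI hstar hcov)
  · push Not at hpair
    exact le_max_of_le_left (card_le_of_forall_not_pair_vertexCover hr hI hpair)

end SetFamily

section CrossingTriples

variable {α : Type*} [DecidableEq α]

/-- `e` arises from `f` by swapping one vertex of `f` for a vertex of `A`. -/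
def IsSwap (A e f : Finset α) : Prop :=
  ∃ a ∈ A, ∃ x ∈ f, e = insert a (f.erase x)

instance (A e f : Finset α) : Decidable (IsSwap A e f) :=
  inferInstanceAs (Decidable (∃ a ∈ A, ∃ x ∈ f, e = insert a (f.erase x)))

lemma card_filter_isSwap_le (H : Finset (Finset α)) (A f : Finset α) :
    #{e ∈ H | IsSwap A e f} ≤ #A * #f := by
  refine (card_le_card fun e he => ?_).trans
    (card_image₂_le (fun a x => insert a (f.erase x)) A f)
  obtain ⟨-, a, ha, x, hx, rfl⟩ := mem_filter.1 he
  exact mem_image₂_of_mem ha hx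

variable [Fintype α] {A G e : Finset α}

/-- The triples with exactly one vertex in `A`: the extremal hypergraph `H(n, s)` with an arbitrary
set `A` in the role of the first `s` vertices. -/
def crossingTriples (A : Finset α) : Finset (Finset α) :=
  {e | #e = 3 ∧ #(e ∩ A) = 1}

lemma mem_crossingTriples : e ∈ crossingTriples A ↔ #e = 3 ∧ #(e ∩ A) = 1 := by
  simp only [crossingTriples, mem_filter, mem_univ, true_and]

lemma crossingTriples_eq_image₂ (A : Finset α) :
    crossingTriples A = image₂ insert A (powersetCard 2 Aᶜ) := by
  ext e
  simp only [mem_crossingTriples, mem_image₂, mem_powersetCard]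
  constructor
  · rintro ⟨he3, heA⟩
    obtain ⟨a, ha⟩ := card_eq_one.1 heA
    have hae : a ∈ e ∩ A := ha ▸ mem_singleton_self a
    refine ⟨a, (mem_inter.1 hae).2, e.erase a, ⟨fun x hx => mem_compl.2 fun hxA => ?_, ?_⟩,
      insert_erase (mem_inter.1 hae).1⟩
    · have hxa : x ∈ e ∩ A := mem_inter.2 ⟨mem_of_mem_erase hx, hxA⟩
      exact ne_of_mem_erase hx (mem_singleton.1 (ha ▸ hxa))
    · rw [card_erase_of_mem (mem_inter.1 hae).1, he3]
  · rintro ⟨a, ha, p, ⟨hpA, hp2⟩, rfl⟩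
    have hap : a ∉ p := fun h => mem_compl.1 (hpA h) ha
    have hpA' : p ∩ A = ∅ :=
      disjoint_iff_inter_eq_empty.1 (disjoint_left.2 fun x hx => mem_compl.1 (hpA hx))
    rw [card_insert_of_notMem hap, hp2, insert_inter_of_mem ha, hpA']
    exact ⟨rfl, card_singleton a⟩

lemma insert_pair_mem_crossingTriples {a x y : α} (ha : a ∈ A) (hx : x ∉ A) (hy : y ∉ A)
    (hxy : x ≠ y) : {a, x, y} ∈ crossingTriples A := by
  rw [crossingTriples_eq_image₂]
  exact mem_image₂_of_mem ha (mem_powersetCard.2 ⟨by grind [mem_compl], card_pair hxy⟩)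

lemma card_crossingTriples (A : Finset α) :
    #(crossingTriples A) = #A * (Fintype.card α - #A).choose 2 := by
  rw [crossingTriples_eq_image₂, card_image₂_iff.2, card_powersetCard, card_compl]
  rintro ⟨a, p⟩ hap ⟨b, q⟩ hbq heq
  simp only [Set.mem_prod, mem_coe, mem_powersetCard] at hap hbq heq
  have hab : a = b := by
    have := heq.le (mem_insert_self a p)
    grind [mem_compl]
  have hpq : p = q := by
    ext x
    have := congrArg (x ∈ ·) heq
    grind [mem_compl]
  rw [hab, hpq]

lemma image_crossingTriples (σ : Equiv.Perm α) (A : Finset α) :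
    (crossingTriples A).image (image σ) = crossingTriples (A.image σ) := by
  refine eq_of_subset_of_card_le (fun e he => ?_) ?_
  · obtain ⟨f, hf, rfl⟩ := mem_image.1 he
    simpa only [mem_crossingTriples, ← image_inter _ _ σ.injective,
      card_image_of_injective _ σ.injective] using hf
  · simp only [card_image_of_injective _ (image_injective σ.injective), card_crossingTriples,
      card_image_of_injective _ σ.injective, le_refl]

lemma exists_perm_crossingTriples_eq_image {B : Finset α} (hAB : #A = #B) :
    ∃ σ : Equiv.Perm α, crossingTriples B = (crossingTriples A).image (image σ) := by
  obtain ⟨σ, rfl⟩ := Equiv.Perm.exists_map_finset_eq A B hAB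
  exact ⟨σ, by rw [image_crossingTriples, map_eq_image]; rfl⟩

variable {H : Finset (Finset α)}

/-- Pairs `{x, y}` outside `A` are recovered from the missing triples `{a, x, y}`. -/
lemma choose_two_le_card_crossingTriples_sdiff (hG : G ⊆ Aᶜ)
    (h : ∀ x ∈ G, ∀ y ∈ G, x ≠ y → ∃ a ∈ A, {a, x, y} ∉ H) :
    (#G).choose 2 ≤ #(crossingTriples A \ H) := by
  rw [← card_powersetCard]
  refine card_le_card_of_surjOn (· \ A) fun p hp => ?_
  obtain ⟨hpG, hp2⟩ := mem_powersetCard.1 (mem_coe.1 hp)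
  obtain ⟨x, y, hxy, rfl⟩ := card_eq_two.1 hp2
  have hx : x ∉ A := mem_compl.1 (hG (hpG (by simp)))
  have hy : y ∉ A := mem_compl.1 (hG (hpG (by simp)))
  obtain ⟨a, ha, haH⟩ := h x (hpG (by simp)) y (hpG (by simp)) hxy
  refine ⟨{a, x, y}, mem_coe.2
    (mem_sdiff.2 ⟨insert_pair_mem_crossingTriples ha hx hy hxy, haH⟩), ?_⟩
  ext z
  simp only [mem_sdiff, mem_insert, mem_singleton]
  grind

lemma two_le_card_inter_of_mem_sdiff_crossingTriples (hr : (H : Set (Finset α)).Sized 3)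
    (hA : IsVertexCover H A) (he : e ∈ H \ crossingTriples A) : 2 ≤ #(e ∩ A) := by
  obtain ⟨heH, heA⟩ := mem_sdiff.1 he
  have hpos : 0 < #(e ∩ A) := (hA e heH).card_pos
  have hne : #(e ∩ A) ≠ 1 := fun h => heA (mem_crossingTriples.2 ⟨hr heH, h⟩)
  omega

lemma card_sdiff_crossingTriples_le (hr : (H : Set (Finset α)).Sized 3)
    (hA : IsVertexCover H A) :
    #(H \ crossingTriples A) ≤ (#A).choose 2 * (Fintype.card α - 2) := by
  have hsub : H \ crossingTriples A ⊆ {e ∈ H | 2 ≤ #(e ∩ A)} := fun e he =>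
    mem_filter.2 ⟨sdiff_subset he, two_le_card_inter_of_mem_sdiff_crossingTriples hr hA he⟩
  simpa only [Nat.reduceSub, Nat.choose_one_right] using
    (card_le_card hsub).trans (card_filter_le_card_inter_le hr A 2)

end CrossingTriples

section Matching

variable {n s m : ℕ} {H K : Finset (Finset (Fin n))} {A : Finset (Fin n)}

lemma Uniform3.sized (hU : Uniform3 H) : (H : Set (Finset (Fin n))).Sized 3 :=
  fun e he => hU e (mem_coe.1 he)

lemma Uniform3.mono (hU : Uniform3 H) (hKH : K ⊆ H) : Uniform3 K :=
  fun e he => hU e (hKH he)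

lemma MatchingAtMost.mono (hM : MatchingAtMost H s) (hKH : K ⊆ H) : MatchingAtMost K s :=
  fun M hMK => hM M (hMK.trans hKH)

lemma matchingAtMost_zero_iff : MatchingAtMost H 0 ↔ H = ∅ := by
  refine ⟨fun hM => eq_empty_of_forall_notMem fun e he => ?_, ?_⟩
  · have := hM {e} (singleton_subset_iff.2 he) (by simp)
    simp at this
  · rintro rfl M hM -
    simp [subset_empty.1 hM]

lemma MatchingAtMost.intersecting (hU : Uniform3 H) (hM : MatchingAtMost H 1) :
    (H : Set (Finset (Fin n))).Intersecting := by
  intro e he f hf hdisj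
  have hef : e ≠ f := by
    rintro rfl
    have := hU e he
    simp_all
  have := hM {e, f} (by grind) (by
    rw [coe_pair]
    exact Set.pairwise_pair_of_symm.2 fun _ => hdisj)
  rw [card_pair hef] at this
  omega

lemma IsVertexCover.matchingAtMost (hA : IsVertexCover H A) : MatchingAtMost H #A := by
  intro M hM hdisj
  refine (card_le_card_biUnion (f := (· ∩ A)) (fun e he f hf hef => ?_)
    fun e he => hA e (hM he)).trans (card_le_card (biUnion_subset.2 fun e _ => inter_subset_right))
  exact (hdisj he hf hef).mono inter_subset_left inter_subset_left

lemma isVertexCover_biUnion {M : Finset (Finset (Fin n))} (hU : Uniform3 H)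
    (hH : MatchingAtMost H m) (hMH : M ⊆ H) (hM : (M : Set (Finset (Fin n))).Pairwise Disjoint)
    (hmM : m ≤ #M) : IsVertexCover H (M.biUnion id) := by
  intro e he
  by_contra hne
  have hdisj : ∀ f ∈ M, Disjoint e f := (disjoint_biUnion_right _ _ _).1
    (disjoint_iff_inter_eq_empty.2 (not_nonempty_iff_eq_empty.1 hne))
  have heM : e ∉ M := fun h => by
    have := hU e he
    simp [disjoint_self.1 (hdisj e h)] at this
  have := hH (insert e M) (insert_subset he hMH) (by
    rw [coe_insert]
    exact hM.insert fun f hf _ => ⟨hdisj f hf, (hdisj f hf).symm⟩)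
  rw [card_insert_of_notMem heM] at this
  omega

lemma exists_vertexCover_notMem (hU : Uniform3 H) (hH : MatchingAtMost H m) {v : Fin n}
    (hv : ¬MatchingAtMost (deleteVerts H {v}) (m - 1)) :
    ∃ T, v ∉ T ∧ #T ≤ 3 * m ∧ IsVertexCover H T := by
  simp only [MatchingAtMost, not_forall, not_le] at hv
  obtain ⟨M, hMv, hM, hmM⟩ := hv
  have hMH : M ⊆ H := hMv.trans (deleteVerts_subset H {v})
  refine ⟨M.biUnion id, fun hvM => ?_, ?_, isVertexCover_biUnion hU hH hMH hM (by omega)⟩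
  · obtain ⟨e, he, hve⟩ := mem_biUnion.1 hvM
    exact disjoint_singleton_right.1 (mem_deleteVerts.1 (hMv he)).2 hve
  · rw [mul_comm]
    grw [card_biUnion_le_card_mul M id 3 fun e he => (hU e (hMH he)).le, hH M hMH hM]

lemma MatchingAtMost.exists_reduction (hs : s ≤ n) (hM : MatchingAtMost H s) :
    ∃ A : Finset (Fin n), ∃ m, #A + m = s ∧ MatchingAtMost (deleteVerts H A) m ∧
      (m ≠ 0 → ∀ v, ¬MatchingAtMost (deleteVerts (deleteVerts H A) {v}) (m - 1)) := by
  classical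
  have hex : ∃ m, ∃ A : Finset (Fin n), #A + m = s ∧ MatchingAtMost (deleteVerts H A) m :=
    ⟨s, ∅, by simp, hM.mono (deleteVerts_subset H ∅)⟩
  obtain ⟨A, hAm, hA⟩ := Nat.find_spec hex
  refine ⟨A, Nat.find hex, hAm, hA, fun hm v hv => ?_⟩
  have hcard : #(insert v A) ≤ #A + 1 := card_insert_le v A
  obtain ⟨B, hvAB, hB⟩ := exists_superset_card_eq hcard
    (by rw [Fintype.card_fin]; omega)
  refine Nat.find_min hex (Nat.sub_one_lt hm) ⟨B, by omega, hv.mono fun e he => ?_⟩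
  obtain ⟨heH, heB⟩ := mem_deleteVerts.1 he
  obtain ⟨hve, hAe⟩ := disjoint_insert_right.1 (heB.mono_right hvAB)
  exact mem_deleteVerts.2 ⟨mem_deleteVerts.2 ⟨heH, hAe⟩, disjoint_singleton_right.2 hve⟩

end Matching

section VertexCover

variable {n s : ℕ} {H : Finset (Finset (Fin n))}

lemma card_lt_or_exists_vertexCover_singleton (hn : 12 ≤ n) (hU : Uniform3 H)
    (hM : MatchingAtMost H 1) : #H < (n - 1).choose 2 ∨ ∃ v, IsVertexCover H {v} := by
  have : NeZero n := ⟨by omega⟩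
  by_cases hstar : ∀ v, ∃ e ∈ H, v ∉ e
  · have hle := card_le_of_intersecting_of_not_star hU.sized (hM.intersecting hU) hstar
    rw [Fintype.card_fin] at hle
    exact .inl (hle.trans_lt (max_lt_choose_two_pred hn))
  · push Not at hstar
    obtain ⟨v, hv⟩ := hstar
    exact .inr ⟨v, fun e he => ⟨v, mem_inter.2 ⟨hv e he, mem_singleton_self v⟩⟩⟩

lemma card_lt_or_exists_vertexCover_of_ne_one (hs : s ≠ 1) (hn : 12 * s ^ 2 ≤ n)
    (hU : Uniform3 H) (hM : MatchingAtMost H s) :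
    #H < s * (n - s).choose 2 ∨ ∃ A, #A = s ∧ IsVertexCover H A := by
  obtain ⟨A, m, hAm, hA, hred⟩ := hM.exists_reduction (by nlinarith)
  obtain rfl | hm := eq_or_ne m 0
  · exact .inr ⟨A, hAm, deleteVerts_eq_empty_iff.1 (matchingAtMost_zero_iff.1 hA)⟩
  left
  have hs2 : 2 ≤ s := by omega
  have : NeZero n := ⟨by nlinarith⟩
  have hUA : Uniform3 (deleteVerts H A) := hU.mono (deleteVerts_subset H A)
  have hrest : #(deleteVerts H A) ≤ 3 * m * (3 * m * (n - 2)) := by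
    simpa only [Fintype.card_fin, Nat.reduceSub, Nat.choose_one_right] using
      card_le_of_forall_exists_vertexCover hUA.sized
        fun v => exists_vertexCover_notMem hUA hA (hred hm v)
  calc #H ≤ #(deleteVerts H A) + #A * (n - 1).choose 2 := by
        simpa only [Fintype.card_fin] using card_le_card_deleteVerts_add hU.sized A
    _ ≤ 3 * m * (3 * m * (n - 2)) + #A * (n - 1).choose 2 := by grw [hrest]
    _ < s * (n - s).choose 2 := mul_add_mul_choose_two_pred_lt hs2 hn hm hAm

lemma card_lt_or_exists_vertexCover (hn : 12 * s ^ 2 ≤ n) (hU : Uniform3 H)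
    (hM : MatchingAtMost H s) :
    #H < s * (n - s).choose 2 ∨ ∃ A, #A = s ∧ IsVertexCover H A := by
  obtain rfl | hs := eq_or_ne s 1
  · rw [one_mul]
    exact (card_lt_or_exists_vertexCover_singleton (by omega) hU hM).imp_right
      fun ⟨v, hv⟩ => ⟨{v}, card_singleton v, hv⟩
  · exact card_lt_or_exists_vertexCover_of_ne_one hs hn hU hM

end VertexCover

section F32Free

variable {n s : ℕ} {H : Finset (Finset (Fin n))} {A e : Finset (Fin n)}

lemma hasCopy_F32Edges {a b c x y : Fin n} (hnodup : [a, b, c, x, y].Nodup)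
    (habc : {a, b, c} ∈ H) (ha : {a, x, y} ∈ H) (hb : {b, x, y} ∈ H) (hc : {c, x, y} ∈ H) :
    HasCopy F32Edges H := by
  refine ⟨![a, b, c, x, y], ?_, ?_⟩
  · intro i j hij
    fin_cases i <;> fin_cases j <;> simp_all
  · rintro e (rfl | rfl | rfl | rfl) <;> simpa only [image_insert, image_singleton]

lemma not_hasCopy_F32Edges_crossingTriples (A : Finset (Fin n)) :
    ¬HasCopy F32Edges (crossingTriples A) := by
  rintro ⟨f, hf, hcopy⟩
  let w (i : Fin 5) : ℕ := if f i ∈ A then 1 else 0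
  have sum_eq_one {e : Finset (Fin 5)} (he : e ∈ F32Edges) : ∑ i ∈ e, w i = 1 := by
    rw [← (mem_crossingTriples.1 (hcopy e he)).2, ← filter_mem_eq_inter, card_filter,
      sum_image hf.injOn]
  have h012 : w 0 + (w 1 + w 2) = 1 := sum_eq_one (e := {0, 1, 2}) (by simp [F32Edges])
  have h034 : w 0 + (w 3 + w 4) = 1 := sum_eq_one (e := {0, 3, 4}) (by simp [F32Edges])
  have h134 : w 1 + (w 3 + w 4) = 1 := sum_eq_one (e := {1, 3, 4}) (by simp [F32Edges])
  have h234 : w 2 + (w 3 + w 4) = 1 := sum_eq_one (e := {2, 3, 4}) (by simp [F32Edges])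
  omega

lemma choose_two_le_card_crossingTriples_sdiff_of_subset (hU : Uniform3 H)
    (hF : ¬HasCopy F32Edges H) (he : e ∈ H) (heA : e ⊆ A) :
    (#Aᶜ).choose 2 ≤ #(crossingTriples A \ H) := by
  obtain ⟨a, b, c, hab, hac, hbc, rfl⟩ := card_eq_three.1 (hU e he)
  refine choose_two_le_card_crossingTriples_sdiff subset_rfl fun x hx y hy hxy => ?_
  by_contra! hall
  refine hF (hasCopy_F32Edges (x := x) (y := y) ?_ he (hall a ?_) (hall b ?_) (hall c ?_)) <;>
    grind [mem_compl]

/-- Two vertices `x, z` with `{x, a, y}, {z, a, y} ∈ H` would complete `{a', x, z}` and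
`{a', a, y}` to a copy of `F_{3,2}`. -/
lemma choose_two_card_filter_le (hF : ¬HasCopy F32Edges H) {a a' y : Fin n} (ha' : a' ∈ A)
    (haa' : a ≠ a') (ha : a ∈ A) (hy : y ∉ A) (he : {a', a, y} ∈ H) :
    (#{x ∈ Aᶜ.erase y | {x, a, y} ∈ H}).choose 2 ≤ #(crossingTriples A \ H) := by
  refine choose_two_le_card_crossingTriples_sdiff
    ((filter_subset _ _).trans (erase_subset _ _)) fun x hx z hz hxz => ⟨a', ha', fun hxzH => ?_⟩
  refine hF (hasCopy_F32Edges ?_ hxzH he (mem_filter.1 hx).2 (mem_filter.1 hz).2)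
  grind [mem_compl]

lemma exists_eq_of_two_le_card_inter (he : #e = 3) (heA : ¬e ⊆ A) (h : 2 ≤ #(e ∩ A)) :
    ∃ a ∈ A, ∃ a' ∈ A, ∃ y ∉ A, a ≠ a' ∧ e = {a', a, y} := by
  obtain ⟨y, hye, hyA⟩ := not_subset.1 heA
  obtain ⟨a, ha, a', ha', haa'⟩ := one_lt_card.1 h
  obtain ⟨hae, haA⟩ := mem_inter.1 ha
  obtain ⟨hae', haA'⟩ := mem_inter.1 ha'
  refine ⟨a, haA, a', haA', y, hyA, haa', (eq_of_subset_of_card_le ?_ ?_).symm⟩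
  · simp only [insert_subset_iff, singleton_subset_iff]
    exact ⟨hae', hae, hye⟩
  · rw [he, card_eq_three.2 ⟨a', a, y, haa'.symm, by grind, by grind, rfl⟩]

lemma lt_card_filter_isSwap {k : ℕ} (hU : Uniform3 H) (hF : ¬HasCopy F32Edges H)
    (hmiss : #(crossingTriples A \ H) < (#Aᶜ - (k + 1)).choose 2) (he : e ∈ H)
    (h2 : 2 ≤ #(e ∩ A)) : k < #{f ∈ crossingTriples A \ H | IsSwap A e f} := by
  have heA : ¬e ⊆ A := fun heA => hmiss.not_ge <|
    (Nat.choose_le_choose 2 (Nat.sub_le _ _)).trans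
      (choose_two_le_card_crossingTriples_sdiff_of_subset hU hF he heA)
  obtain ⟨a, ha, a', ha', y, hy, haa', rfl⟩ := exists_eq_of_two_le_card_inter (hU e he) heA h2
  have hpresent : #{x ∈ Aᶜ.erase y | {x, a, y} ∈ H} < #Aᶜ - (k + 1) := by
    by_contra! hle
    exact hmiss.not_ge
      ((Nat.choose_le_choose 2 hle).trans (choose_two_card_filter_le hF ha' haa' ha hy he))
  have habsent : k < #{x ∈ Aᶜ.erase y | {x, a, y} ∉ H} := by
    have := card_filter_add_card_filter_not (s := Aᶜ.erase y) ({·, a, y} ∈ H)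
    rw [card_erase_of_mem (mem_compl.2 hy)] at this
    omega
  refine habsent.trans_le (card_le_card_of_injOn ({·, a, y}) (fun x hx => ?_) ?_)
  · obtain ⟨hxA, hxH⟩ := mem_filter.1 (mem_coe.1 hx)
    obtain ⟨hxy, hxA⟩ := mem_erase.1 hxA
    have hcross : {x, a, y} ∈ crossingTriples A :=
      insert_comm x a {y} ▸ insert_pair_mem_crossingTriples ha (mem_compl.1 hxA) hy hxy
    refine mem_coe.2 (mem_filter.2 ⟨mem_sdiff.2 ⟨hcross, hxH⟩,
      a', ha', x, mem_insert_self x _, ?_⟩)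
    rw [erase_insert (by grind [mem_compl])]
  · intro x hx z _ hxz
    obtain ⟨hxy, hxA⟩ := mem_erase.1 (mem_filter.1 (mem_coe.1 hx)).1
    have hxay : x ∉ ({a, y} : Finset (Fin n)) := by grind [mem_compl]
    exact (insert_inj hxay).1 hxz

lemma card_lt_card_crossingTriples (hn : 12 * #A ^ 2 ≤ n) (hU : Uniform3 H)
    (hF : ¬HasCopy F32Edges H) (hA : IsVertexCover H A) (hH : ¬H ⊆ crossingTriples A) :
    #H < #(crossingTriples A) := by
  rw [← card_sdiff_lt_card_sdiff_iff]
  by_contra! hle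
  obtain ⟨e, he⟩ := sdiff_nonempty.2 hH
  have h2 {e : Finset (Fin n)} (he : e ∈ H \ crossingTriples A) : 2 ≤ #(e ∩ A) :=
    two_le_card_inter_of_mem_sdiff_crossingTriples hU.sized hA he
  have hA2 : 2 ≤ #A := (h2 he).trans (card_le_card inter_subset_right)
  have hmiss : #(crossingTriples A \ H) < (#Aᶜ - (3 * #A + 1)).choose 2 := by
    have hsub : #Aᶜ - (3 * #A + 1) = n - (4 * #A + 1) := by
      rw [card_compl, Fintype.card_fin]
      omega
    have hbad := card_sdiff_crossingTriples_le hU.sized hA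
    rw [Fintype.card_fin] at hbad
    rw [hsub]
    exact hle.trans_lt (hbad.trans_lt (choose_two_mul_lt_choose_two_sub hA2 hn))
  have hcount : #(H \ crossingTriples A) * (3 * #A + 1) ≤ #(crossingTriples A \ H) * (3 * #A) :=
    card_mul_le_card_mul (IsSwap A)
      (fun e he => lt_card_filter_isSwap hU hF hmiss (sdiff_subset he) (h2 he)) fun f hf => by
        rw [← (mem_crossingTriples.1 (mem_sdiff.1 hf).1).1, mul_comm]
        exact card_filter_isSwap_le _ A f
  have hpos : 0 < #(H \ crossingTriples A) := card_pos.2 ⟨e, he⟩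
  nlinarith

lemma card_lt_or_exists_subset_crossingTriples (hn : 12 * s ^ 2 ≤ n) (hU : Uniform3 H)
    (hF : ¬HasCopy F32Edges H) (hM : MatchingAtMost H s) :
    #H < s * (n - s).choose 2 ∨ ∃ A, #A = s ∧ H ⊆ crossingTriples A := by
  obtain hlt | ⟨A, rfl, hA⟩ := card_lt_or_exists_vertexCover hn hU hM
  · exact .inl hlt
  by_cases hH : H ⊆ crossingTriples A
  · exact .inr ⟨A, rfl, hH⟩
  · left
    simpa only [card_crossingTriples, Fintype.card_fin] using
      card_lt_card_crossingTriples hn hU hF hA hH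

lemma uniform3_crossingTriples (A : Finset (Fin n)) : Uniform3 (crossingTriples A) :=
  fun _ he => (mem_crossingTriples.1 he).1

lemma matchingAtMost_crossingTriples (A : Finset (Fin n)) :
    MatchingAtMost (crossingTriples A) #A :=
  IsVertexCover.matchingAtMost fun _ he => card_pos.1 ((mem_crossingTriples.1 he).2 ▸ one_pos)

lemma Hns_eq_crossingTriples (n s : ℕ) : Hns n s = crossingTriples {v : Fin n | (v : ℕ) < s} := by
  simp only [Hns, crossingTriples, inter_filter, inter_univ]

end F32Free

theorem stmt_13 (n s : ℕ) (hn : 12 * s ^ 2 ≤ n) :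
    IsGreatest {m | ∃ H : Finset (Finset (Fin n)), Uniform3 H ∧
      ¬ HasCopy F32Edges H ∧ MatchingAtMost H s ∧ H.card = m}
      (s * (n - s).choose 2) ∧
    ∀ H : Finset (Finset (Fin n)), Uniform3 H → ¬ HasCopy F32Edges H →
      MatchingAtMost H s → H.card = s * (n - s).choose 2 →
      ∃ σ : Equiv.Perm (Fin n), H = (Hns n s).image (fun e => e.image σ) := by
  have hsn : s ≤ n := by nlinarith
  obtain ⟨A, hA, hHns⟩ : ∃ A : Finset (Fin n), #A = s ∧ Hns n s = crossingTriples A :=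
    ⟨_, by rw [Fin.card_filter_val_lt, min_eq_right hsn], Hns_eq_crossingTriples n s⟩
  have hcard {B : Finset (Fin n)} (hB : #B = s) : #(crossingTriples B) = s * (n - s).choose 2 := by
    rw [card_crossingTriples, Fintype.card_fin, hB]
  refine ⟨⟨⟨crossingTriples A, uniform3_crossingTriples A,
    not_hasCopy_F32Edges_crossingTriples A, hA ▸ matchingAtMost_crossingTriples A, hcard hA⟩, ?_⟩,
    fun H hU hF hM hH => ?_⟩
  · rintro _ ⟨H, hU, hF, hM, rfl⟩
    obtain hlt | ⟨B, hB, hHB⟩ := card_lt_or_exists_subset_crossingTriples hn hU hF hM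
    · exact hlt.le
    · exact hcard hB ▸ card_le_card hHB
  · obtain hlt | ⟨B, hB, hHB⟩ := card_lt_or_exists_subset_crossingTriples hn hU hF hM
    · exact absurd hH hlt.ne
    · rw [hHns, eq_of_subset_of_card_le hHB (by rw [hcard hB, hH])]
      exact exists_perm_crossingTriples_eq_image (hA.trans hB.symm)
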